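/- There exists a constant C depending only on d such that the following holds: if O is a finite family of bounded nonempty objects in ℝ^d with density ρ, t ≥ 1 is an integer, and O' is a t-shallow minor of O, then O' has density at most ρ·(t+1)^C. -/

import Mathlib

/-- A finite family `O` of subsets of `ℝ^d` has density at most `ρ` if every bounded
subset `b` of `ℝ^d` intersects at most `ρ` members of `O` whose diameter is at least
the diameter of `b`. -/
def FamilyDensityLE (d : ℕ) (O : Set (Set (EuclideanSpace ℝ (Fin d)))) (ρ : ℝ) : Prop :=
  ∀ b : Set (EuclideanSpace ℝ (Fin d)), Bornology.IsBounded b →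
    ({o ∈ O | (o ∩ b).Nonempty ∧ Metric.diam b ≤ Metric.diam o}.ncard : ℝ) ≤ ρ

/-- The intersection graph of a family of objects. -/
def InterGraph {d : ℕ} (O : Set (Set (EuclideanSpace ℝ (Fin d)))) : SimpleGraph O :=
  SimpleGraph.fromRel fun o o' => ((o : Set (EuclideanSpace ℝ (Fin d))) ∩ o').Nonempty

/-- A graph is `t`-shallow if some vertex reaches every other vertex by a path of at most
`t` edges (graph radius at most `t`). -/
def IsShallowGraph {V : Type*} (G : SimpleGraph V) (t : ℕ) : Prop :=
  ∃ h : V, ∀ v : V, G.Reachable h v ∧ G.dist h v ≤ t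

/-- `O'` is a `t`-shallow minor of the family `O`: every member of `O'` is the union of a
cluster (a subfamily of `O`), the clusters are pairwise disjoint, and the intersection graph
of each cluster is `t`-shallow. -/
def IsShallowMinorFamily (d t : ℕ) (O O' : Set (Set (EuclideanSpace ℝ (Fin d)))) : Prop :=
  ∃ cl : O' → Set (Set (EuclideanSpace ℝ (Fin d))),
    (∀ o', cl o' ⊆ O) ∧
    (∀ o' : O', (o' : Set (EuclideanSpace ℝ (Fin d))) = ⋃₀ cl o') ∧
    (∀ o₁ o₂ : O', o₁ ≠ o₂ → Disjoint (cl o₁) (cl o₂)) ∧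
    (∀ o', IsShallowGraph (InterGraph (cl o')) t)

/-!
A large union of shallowly connected sets contains a large member close to any of its points:
walking from that point inside the cluster, as long as every set met has diameter at most `r`, one
moves by at most `r` per step, so `2 * t` steps only reach a set of diameter at most
`2 * (2 * t + 1) * r`. Hence each object of the minor that meets `b` and is at least as large as
`b` has in its cluster an object of `O` of diameter at least `r := diam b / (4 * (t + 1))` that
meets a fixed ball of radius `6 * (t + 1) * r`. These objects are distinct, as the clusters are
disjoint, and the ball is covered by `(24 * (t + 1)) ^ m` balls of diameter at most `r`, where `m`
is the doubling dimension; the density of `O` bounds the number of objects meeting each of them.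
-/

open Bornology Metric
open scoped NNReal

/-- The intersection graph of a family of sets, generalizing `InterGraph` to any ambient type. -/
def intersectionGraph {X : Type*} (O : Set (Set X)) : SimpleGraph O :=
  SimpleGraph.fromRel fun o o' => ((o : Set X) ∩ o').Nonempty

/-- `O'` is a `t`-shallow minor of `O`, generalizing `IsShallowMinorFamily` to any ambient type;
`c o'` is the cluster whose union is `o' ∈ O'`. -/
def IsShallowMinor {X : Type*} (t : ℕ) (O O' : Set (Set X)) : Prop :=
  ∃ c : O' → Set (Set X),
    (∀ o', c o' ⊆ O) ∧
    (∀ o' : O', (o' : Set X) = ⋃₀ c o') ∧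
    (∀ o₁ o₂ : O', o₁ ≠ o₂ → Disjoint (c o₁) (c o₂)) ∧
    (∀ o', IsShallowGraph (intersectionGraph (c o')) t)

/-- The family `O` of sets has density at most `ρ`, generalizing `FamilyDensityLE` to metric
spaces. As `Set.ncard` is `0` on infinite sets, this is meaningful for finite families only. -/
def HasDensityLE {X : Type*} [PseudoMetricSpace X] (O : Set (Set X)) (ρ : ℝ) : Prop :=
  ∀ b : Set X, IsBounded b → ({o ∈ O | (o ∩ b).Nonempty ∧ diam b ≤ diam o}.ncard : ℝ) ≤ ρ

/-- The doubling dimension of `X` is at most `m`: every closed ball is covered by `2 ^ m` closed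
balls of half its radius. -/
def DoublingDimLE (X : Type*) [PseudoMetricSpace X] (m : ℕ) : Prop :=
  ∀ (x : X) (ε : ℝ≥0), ∃ N : Finset X, N.card ≤ 2 ^ m ∧ IsCover ε (closedBall x (2 * ε)) N

theorem inter_nonempty_of_intersectionGraph_adj {X : Type*} {O : Set (Set X)} (o o' : O)
    (h : (intersectionGraph O).Adj o o') : ((o : Set X) ∩ o').Nonempty := by
  obtain ⟨-, h | h⟩ := (SimpleGraph.fromRel_adj _ _ _).1 h
  · exact h
  · rwa [Set.inter_comm]

section IntersectingSets

variable {V X : Type*} [PseudoMetricSpace X] {G : SimpleGraph V} {f : V → Set X} {p : X} {t : ℕ}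

theorem IsShallowGraph.exists_walk_length_le (hG : IsShallowGraph G t) (u v : V) :
    ∃ w : G.Walk u v, w.length ≤ 2 * t := by
  obtain ⟨h, hh⟩ := hG
  obtain ⟨wu, hwu⟩ := (hh u).1.exists_walk_length_eq_dist
  obtain ⟨wv, hwv⟩ := (hh v).1.exists_walk_length_eq_dist
  have hu := (hh u).2
  have hv := (hh v).2
  refine ⟨wu.reverse.append wv, ?_⟩
  rw [SimpleGraph.Walk.length_append, SimpleGraph.Walk.length_reverse]
  omega

theorem subset_closedBall_of_walk {r R : ℝ} (hadj : ∀ i j, G.Adj i j → (f i ∩ f j).Nonempty)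
    (hbdd : ∀ i, IsBounded (f i)) (hr : 0 ≤ r)
    (hsmall : ∀ i, (f i ∩ closedBall p R).Nonempty → diam (f i) ≤ r) {u v : V}
    (w : G.Walk v u) (hp : p ∈ f u) (hw : w.length * r ≤ R) :
    f v ⊆ closedBall p ((w.length + 1) * r) := by
  induction w with
  | nil =>
    have hR : 0 ≤ R := by simpa using hw
    intro x hx
    have hxp : dist x p ≤ r := (dist_le_diam_of_mem (hbdd _) hx hp).trans
      (hsmall _ ⟨p, hp, mem_closedBall_self hR⟩)
    simpa using hxp
  | @cons v v' u hvv' w ih =>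
    rw [SimpleGraph.Walk.length_cons, Nat.cast_add_one] at hw ⊢
    obtain ⟨q, hqv, hqv'⟩ := hadj v v' hvv'
    have hq : dist q p ≤ (w.length + 1) * r := ih hp (by linarith) hqv'
    intro x hx
    have hxq : dist x q ≤ r := (dist_le_diam_of_mem (hbdd v) hx hqv).trans
      (hsmall v ⟨q, hqv, hq.trans hw⟩)
    rw [mem_closedBall]
    linarith [dist_triangle x q p]

theorem IsShallowGraph.exists_le_diam (hG : IsShallowGraph G t)
    (hadj : ∀ i j, G.Adj i j → (f i ∩ f j).Nonempty) (hbdd : ∀ i, IsBounded (f i))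
    (hp : p ∈ ⋃ i, f i) {r : ℝ} (hr : 0 ≤ r) (hdiam : 4 * (t + 1) * r ≤ diam (⋃ i, f i)) :
    ∃ i, (f i ∩ closedBall p (2 * t * r)).Nonempty ∧ r ≤ diam (f i) := by
  obtain ⟨u, hu⟩ := Set.mem_iUnion.1 hp
  obtain rfl | hr := hr.eq_or_lt
  · exact ⟨u, ⟨p, hu, mem_closedBall_self (by simp)⟩, diam_nonneg⟩
  by_contra! hsmall
  have hsub : ⋃ i, f i ⊆ closedBall p ((2 * t + 1) * r) := by
    refine Set.iUnion_subset fun v => ?_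
    obtain ⟨w, hw⟩ := hG.exists_walk_length_le v u
    have hw : (w.length : ℝ) ≤ 2 * t := mod_cast hw
    exact (subset_closedBall_of_walk hadj hbdd hr.le (fun i hi => (hsmall i hi).le) w hu
      (by gcongr)).trans (closedBall_subset_closedBall (by gcongr))
  have hle : diam (⋃ i, f i) ≤ 2 * ((2 * t + 1) * r) :=
    (diam_mono hsub isBounded_closedBall).trans (diam_closedBall (by positivity))
  linarith

end IntersectingSets

section Doubling

variable {X : Type*} [PseudoMetricSpace X] {m : ℕ}

theorem DoublingDimLE.exists_isCover_closedBall_two_pow_mul (hX : DoublingDimLE X m) (x : X)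
    (ε : ℝ≥0) (k : ℕ) :
    ∃ N : Finset X, N.card ≤ (2 ^ k) ^ m ∧ IsCover ε (closedBall x (2 ^ k * ε)) N := by
  classical
  induction k generalizing ε with
  | zero => exact ⟨{x}, by simp, .of_subset_iUnion_closedBall (by simp)⟩
  | succ k ih =>
    obtain ⟨N, hNcard, hN⟩ := ih (2 * ε)
    choose M hMcard hM using fun y => hX y ε
    refine ⟨N.biUnion M, ?_, .of_subset_iUnion_closedBall fun z hz => ?_⟩
    · calc (N.biUnion M).card ≤ N.card * 2 ^ m :=
            Finset.card_biUnion_le_card_mul _ _ _ fun y _ => hMcard y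
        _ ≤ (2 ^ k) ^ m * 2 ^ m := by gcongr
        _ = (2 ^ (k + 1)) ^ m := by rw [← mul_pow, ← pow_succ]
    · have hz : z ∈ closedBall x (2 ^ k * (2 * ε : ℝ≥0)) := by
        rwa [NNReal.coe_mul, NNReal.coe_ofNat, ← mul_assoc, ← pow_succ]
      obtain ⟨y, hy, hzy⟩ := Set.mem_iUnion₂.1 (hN.subset_iUnion_closedBall hz)
      obtain ⟨y', hy', hzy'⟩ := Set.mem_iUnion₂.1 ((hM y).subset_iUnion_closedBall hzy)
      exact Set.mem_iUnion₂.2 ⟨y', Finset.mem_biUnion.2 ⟨y, hy, hy'⟩, hzy'⟩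

theorem DoublingDimLE.exists_isCover_closedBall_natCast_mul (hX : DoublingDimLE X m) (x : X)
    (ε : ℝ≥0) {n : ℕ} (hn : n ≠ 0) :
    ∃ N : Finset X, N.card ≤ (2 * n) ^ m ∧ IsCover ε (closedBall x (n * ε)) N := by
  obtain ⟨N, hNcard, hN⟩ := hX.exists_isCover_closedBall_two_pow_mul x ε (Nat.log 2 n + 1)
  refine ⟨N, hNcard.trans ?_, hN.anti (closedBall_subset_closedBall ?_)⟩
  · gcongr
    rw [pow_succ']
    gcongr
    exact Nat.pow_log_le_self 2 hn
  · gcongr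
    exact_mod_cast (Nat.lt_pow_succ_log_self one_lt_two n).le

end Doubling

section NormedSpace

variable {E : Type*} [NormedAddCommGroup E] [NormedSpace ℝ E] [FiniteDimensional ℝ E]

open Module

theorem card_le_of_isSeparated_closedBall {x : E} {ε : ℝ≥0} (hε : 0 < ε) {s : Finset E}
    (hs : (s : Set E) ⊆ closedBall x (2 * ε)) (hsep : IsSeparated ε (s : Set E)) :
    s.card ≤ 5 ^ finrank ℝ E := by
  classical
  have hε : (0 : ℝ) < ε := hε
  let φ (y : E) : E := (ε : ℝ)⁻¹ • (y - x)
  have hφ : Function.Injective φ := (smul_right_injective E (inv_ne_zero hε.ne')).comp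
    (sub_left_injective (b := x))
  rw [← Finset.card_image_of_injective s hφ]
  refine Besicovitch.card_le_of_separated _ (Finset.forall_mem_image.2 fun y hy => ?_)
    (Finset.forall_mem_image.2 fun y hy => Finset.forall_mem_image.2 fun z hz hyz => ?_)
  · rw [norm_smul, norm_inv, NNReal.norm_eq, inv_mul_le_iff₀ hε, mul_comm, ← dist_eq_norm]
    exact hs hy
  · have hlt : (ε : ENNReal) < edist y z := hsep hy hz (ne_of_apply_ne φ hyz)
    rw [edist_nndist, ENNReal.coe_lt_coe] at hlt
    rw [← smul_sub, sub_sub_sub_cancel_right, norm_smul, norm_inv, NNReal.norm_eq,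
      le_inv_mul_iff₀ hε, mul_one, ← dist_eq_norm]
    exact hlt.le

theorem packingNumber_closedBall_two_mul_le (x : E) {ε : ℝ≥0} (hε : 0 < ε) :
    packingNumber ε (closedBall x (2 * ε)) ≤ (5 ^ finrank ℝ E : ℕ) := by
  refine iSup₂_le fun C hC => iSup_le fun hsep => ?_
  by_contra! hcard
  obtain ⟨s, hsC, hs⟩ := Set.exists_subset_encard_eq (Order.add_one_le_of_lt hcard)
  lift s to Finset E using Set.finite_of_encard_eq_coe (k := 5 ^ finrank ℝ E + 1) (mod_cast hs)
  rw [Set.encard_coe_eq_coe_finsetCard] at hs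
  have hle := card_le_of_isSeparated_closedBall hε (hsC.trans hC) (hsep.mono hsC)
  have hs : s.card = 5 ^ finrank ℝ E + 1 := mod_cast hs
  omega

variable (E) in
theorem doublingDimLE_of_finiteDimensional : DoublingDimLE E (3 * finrank ℝ E) := by
  intro x ε
  obtain rfl | hε := eq_zero_or_pos ε
  · exact ⟨{x}, Nat.one_le_two_pow, .of_subset_iUnion_closedBall (by simp)⟩
  have hle :=
    (coveringNumber_le_packingNumber _ _).trans (packingNumber_closedBall_two_mul_le x hε)
  obtain ⟨N, -, hfin, hN, hcard⟩ :=
    exists_set_encard_eq_coveringNumber (ne_top_of_le_ne_top (ENat.natCast_ne_top _) hle)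
  lift N to Finset E using hfin
  rw [← hcard, Set.encard_coe_eq_coe_finsetCard, Nat.cast_le] at hle
  refine ⟨N, hle.trans ?_, hN⟩
  rw [pow_mul]
  gcongr
  norm_num

end NormedSpace

theorem ncard_le_ncard_of_pairwise_disjoint {ι α : Type*} {c : ι → Set α}
    (hc : Pairwise (Function.onFun Disjoint c)) {S : Set ι} {T : Set α} (hT : T.Finite)
    (hST : ∀ i ∈ S, (c i ∩ T).Nonempty) : S.ncard ≤ T.ncard := by
  choose g hgc hgT using hST
  rw [← Nat.card_coe_set_eq, ← Nat.card_coe_set_eq]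
  have := hT.to_subtype
  refine Nat.card_le_card_of_injective (fun i : S => (⟨g i i.2, hgT i i.2⟩ : T)) fun i j hij => ?_
  have hgij : g i i.2 = g j j.2 := congrArg Subtype.val hij
  exact Subtype.ext (hc.eq (Set.not_disjoint_iff.2 ⟨_, hgc i i.2, hgij ▸ hgc j j.2⟩))

section Density

variable {X : Type*} [PseudoMetricSpace X] {O O' : Set (Set X)} {ρ : ℝ} {t m : ℕ}

theorem HasDensityLE.nonneg (hO : HasDensityLE O ρ) : 0 ≤ ρ :=
  (Nat.cast_nonneg _).trans (hO ∅ isBounded_empty)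

theorem HasDensityLE.mono {ρ' : ℝ} (hO : HasDensityLE O ρ) (h : ρ ≤ ρ') : HasDensityLE O ρ' :=
  fun b hb => (hO b hb).trans h

theorem HasDensityLE.ncard_le_of_isCover (hO : HasDensityLE O ρ) (hfin : O.Finite) {ε : ℝ≥0}
    {A : Set X} {N : Finset X} (hN : IsCover ε A N) :
    ({o ∈ O | (o ∩ A).Nonempty ∧ 2 * ε ≤ diam o}.ncard : ℝ) ≤ N.card * ρ := by
  let P (y : X) : Set (Set X) :=
    {o ∈ O | (o ∩ closedBall y ε).Nonempty ∧ diam (closedBall y ε) ≤ diam o}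
  have hsub : {o ∈ O | (o ∩ A).Nonempty ∧ 2 * ε ≤ diam o} ⊆ ⋃ y ∈ N, P y := by
    rintro o ⟨ho, ⟨x, hxo, hxA⟩, hdiam⟩
    obtain ⟨y, hy, hxy⟩ := Set.mem_iUnion₂.1 (hN.subset_iUnion_closedBall hxA)
    exact Set.mem_iUnion₂.2 ⟨y, hy, ho, ⟨x, hxo, hxy⟩, (diam_closedBall ε.2).trans hdiam⟩
  have hfinP : (⋃ y ∈ N, P y).Finite :=
    hfin.subset (Set.iUnion₂_subset fun _ _ => Set.sep_subset _ _)
  calc ({o ∈ O | (o ∩ A).Nonempty ∧ 2 * ε ≤ diam o}.ncard : ℝ) ≤ (∑ y ∈ N, (P y).ncard : ℕ) :=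
        mod_cast (Set.ncard_le_ncard hsub hfinP).trans (Finset.set_ncard_biUnion_le N P)
    _ = ∑ y ∈ N, ((P y).ncard : ℝ) := Nat.cast_sum _ _
    _ ≤ N.card * ρ := by
        rw [← nsmul_eq_mul]
        exact Finset.sum_le_card_nsmul _ _ _ fun y _ => hO _ isBounded_closedBall

theorem HasDensityLE.ncard_le_of_doublingDimLE (hO : HasDensityLE O ρ) (hX : DoublingDimLE X m)
    (hfin : O.Finite) (x : X) (ε : ℝ≥0) {n : ℕ} (hn : n ≠ 0) :
    ({o ∈ O | (o ∩ closedBall x (n * ε)).Nonempty ∧ 2 * ε ≤ diam o}.ncard : ℝ) ≤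
      (2 * n) ^ m * ρ := by
  obtain ⟨N, hNcard, hN⟩ := hX.exists_isCover_closedBall_natCast_mul x ε hn
  refine (hO.ncard_le_of_isCover hfin hN).trans (mul_le_mul_of_nonneg_right ?_ hO.nonneg)
  exact_mod_cast hNcard

theorem IsShallowGraph.exists_mem_le_diam {c : Set (Set X)}
    (hc : IsShallowGraph (intersectionGraph c) t) (hbdd : ∀ o ∈ c, IsBounded o) {b : Set X}
    (hb : IsBounded b) {x : X} (hx : x ∈ b) (hcb : (⋃₀ c ∩ b).Nonempty)
    (hdiam : diam b ≤ diam (⋃₀ c)) {r : ℝ} (hr : 0 ≤ r) (hrb : 4 * (t + 1) * r = diam b) :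
    ∃ o ∈ c, (o ∩ closedBall x (6 * (t + 1) * r)).Nonempty ∧ r ≤ diam o := by
  obtain ⟨p, hpc, hpb⟩ := hcb
  rw [← hrb, Set.sUnion_eq_iUnion] at hdiam
  rw [Set.sUnion_eq_iUnion] at hpc
  obtain ⟨o, ⟨q, hqo, hqp⟩, ho⟩ := hc.exists_le_diam inter_nonempty_of_intersectionGraph_adj
    (fun o => hbdd o o.2) hpc hr hdiam
  have hpx : dist p x ≤ 4 * (t + 1) * r := hrb ▸ dist_le_diam_of_mem hb hpb hx
  have hqx : dist q x ≤ 6 * (t + 1) * r := by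
    rw [mem_closedBall] at hqp
    linarith [dist_triangle q p x]
  exact ⟨o, o.2, ⟨q, hqo, hqx⟩, ho⟩

theorem HasDensityLE.of_isShallowMinor (hO : HasDensityLE O ρ) (hX : DoublingDimLE X m)
    (hfin : O.Finite) (hbdd : ∀ o ∈ O, IsBounded o) (hminor : IsShallowMinor t O O') :
    HasDensityLE O' (ρ * (24 * (t + 1)) ^ m) := by
  obtain ⟨c, hcO, hc_union, hc_disj, hc_shallow⟩ := hminor
  intro b hb
  obtain rfl | ⟨x, hx⟩ := b.eq_empty_or_nonempty
  · simpa using mul_nonneg hO.nonneg (by positivity)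
  obtain ⟨ε, hε⟩ : ∃ ε : ℝ≥0, 4 * (t + 1) * (2 * ε) = diam b := by
    refine ⟨(diam b / (4 * (t + 1) * 2)).toNNReal, ?_⟩
    rw [Real.coe_toNNReal _ (by positivity), ← mul_assoc, mul_div_cancel₀ _ (by positivity)]
  let T : Set (Set X) :=
    {o ∈ O | (o ∩ closedBall x ((12 * (t + 1) : ℕ) * ε)).Nonempty ∧ 2 * ε ≤ diam o}
  let S : Set O' := {o' | ((o' : Set X) ∩ b).Nonempty ∧ diam b ≤ diam (o' : Set X)}
  have hS : {o' ∈ O' | (o' ∩ b).Nonempty ∧ diam b ≤ diam o'} = Subtype.val '' S :=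
    (Subtype.image_preimage_coe O' {o' | (o' ∩ b).Nonempty ∧ diam b ≤ diam o'}).symm
  have hST : ∀ o' ∈ S, (c o' ∩ T).Nonempty := by
    rintro o' ⟨hmeet, hdiam⟩
    rw [hc_union o'] at hmeet hdiam
    obtain ⟨o, hoc, hox, ho⟩ := (hc_shallow o').exists_mem_le_diam
      (fun o ho => hbdd o (hcO o' ho)) hb hx hmeet hdiam (by positivity) hε
    have hradius : 6 * (t + 1) * (2 * (ε : ℝ)) = (12 * (t + 1) : ℕ) * ε := by push_cast; ring
    exact ⟨o, hoc, hcO o' hoc, hradius ▸ hox, ho⟩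
  calc ({o' ∈ O' | (o' ∩ b).Nonempty ∧ diam b ≤ diam o'}.ncard : ℝ) = S.ncard := by
        rw [hS, Set.ncard_image_of_injective _ Subtype.val_injective]
    _ ≤ T.ncard := mod_cast ncard_le_ncard_of_pairwise_disjoint (fun i j => hc_disj i j)
        (hfin.subset (Set.sep_subset _ _)) hST
    _ ≤ (2 * (12 * (t + 1) : ℕ)) ^ m * ρ := hO.ncard_le_of_doublingDimLE hX hfin x ε (by omega)
    _ = ρ * (24 * (t + 1)) ^ m := by push_cast; ring

theorem stmt3_general (hX : DoublingDimLE X m) :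
    ∃ C : ℕ, 0 < C ∧ ∀ (O O' : Set (Set X)) (ρ : ℝ) (t : ℕ),
      O.Finite → (∀ o ∈ O, IsBounded o) → HasDensityLE O ρ → 1 ≤ t → IsShallowMinor t O O' →
      HasDensityLE O' (ρ * ((t : ℝ) + 1) ^ C) := by
  refine ⟨6 * m + 1, by omega, fun O O' ρ t hfin hbdd hO ht hminor => ?_⟩
  refine (hO.of_isShallowMinor hX hfin hbdd hminor).mono
    (mul_le_mul_of_nonneg_left ?_ hO.nonneg)
  have ht : (2 : ℝ) ≤ t + 1 := by exact_mod_cast Nat.succ_le_succ ht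
  calc (24 * ((t : ℝ) + 1)) ^ m ≤ (2 ^ 5 * (t + 1)) ^ m := by gcongr; norm_num
    _ ≤ ((t + 1) ^ 5 * (t + 1)) ^ m := by gcongr
    _ = (t + 1) ^ (6 * m) := by rw [← pow_succ, ← pow_mul]
    _ ≤ (t + 1) ^ (6 * m + 1) := pow_le_pow_right₀ (by linarith) (Nat.le_succ _)

end Density

/-- there is a constant `C = C(d)` so that every `t`-shallow minor of a family
of density `ρ` has density at most `ρ·(t+1)^C`. -/
theorem stmt3 (d : ℕ) :
    ∃ C : ℕ, 0 < C ∧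
      ∀ (O O' : Set (Set (EuclideanSpace ℝ (Fin d)))) (ρ : ℝ) (t : ℕ),
        O.Finite → (∀ o ∈ O, Bornology.IsBounded o) → (∀ o ∈ O, o.Nonempty) →
        FamilyDensityLE d O ρ → 1 ≤ t → IsShallowMinorFamily d t O O' →
        FamilyDensityLE d O' (ρ * ((t : ℝ) + 1) ^ C) := by
  obtain ⟨C, hC, h⟩ := stmt3_general (doublingDimLE_of_finiteDimensional (EuclideanSpace ℝ (Fin d)))
  exact ⟨C, hC, fun O O' ρ t hfin hbdd _ => h O O' ρ t hfin hbdd⟩
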